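/- (Eigenvalue bound, right-focal problem) Let λ ∈ ℝ and suppose u : N[a+1,b] → ℝ is not identically zero and satisfies u(t) = λ ∑_{s=a+2}^{b} G_r(t, s) u(s) for every t with a+1 ≤ t ≤ b (the Green's-function form of the eigenvalue problem ∇_a^α u(t) + λ u(t) = 0 for a+2 ≤ t ≤ b, with u(a+1) = 0 and ∇_a^{α−1} u(b) = 0). Then |λ| ≥ Γ(α)/( (b − a − 1) · rf(b−a−1, α−1) ). -/

import Mathlib

/-- Rising factorial `rf x r = Γ(x+r)/Γ(x)`, with the convention `rf 0 r = 0`. -/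
noncomputable def rf (x r : ℝ) : ℝ := if x = 0 then 0 else Real.Gamma (x + r) / Real.Gamma x

/-- The right-focal Green's function. -/
noncomputable def Gr (a : ℤ) (α : ℝ) (t s : ℤ) : ℝ :=
  if t ≤ s - 1 then
    (1 / Real.Gamma α) * rf (t - a - 1 : ℝ) (α - 1)
  else
    (1 / Real.Gamma α) * (rf (t - a - 1 : ℝ) (α - 1) - rf (t - s + 1 : ℝ) (α - 1))

/-!
Log-convexity of `Γ` makes `x ↦ rf x r` monotone on `[0, ∞)` for `r ≥ 0`, and this gives
`0 ≤ Gr a α t s ≤ rf (t - a - 1) (α - 1) / Γ α`. Hence every row sum of the kernel is at most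
`M = (b - a - 1) * rf (b - a - 1) (α - 1) / Γ α`, and evaluating the eigenvalue equation where `|u|`
is maximal yields `1 ≤ |lam| * M`.
-/

section Convexity

variable {𝕜 E β : Type*} [Ring 𝕜] [PartialOrder 𝕜] [AddCommGroup E] [Module 𝕜 E]
  [AddCommMonoid β] [PartialOrder β] [IsOrderedAddMonoid β] [Module 𝕜 β]

theorem map_add_map_le_of_convexOn_of_mem_segment {S : Set E} {f : E → β} {x z p q : E}
    (hf : ConvexOn 𝕜 S f) (hx : x ∈ S) (hz : z ∈ S) (hp : p ∈ segment 𝕜 x z)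
    (hpq : p + q = x + z) : f p + f q ≤ f x + f z := by
  obtain ⟨c, d, hc, hd, hcd, rfl⟩ := hp
  have hdc : d + c = 1 := by rw [add_comm, hcd]
  have hq : q = d • x + c • z := by
    refine add_left_cancel (a := c • x + d • z) ?_
    rw [hpq, add_add_add_comm, ← add_smul, ← add_smul, hcd, hdc, one_smul, one_smul]
  calc f (c • x + d • z) + f q
      ≤ (c • f x + d • f z) + (d • f x + c • f z) :=
        add_le_add (hf.2 hx hz hc hd hcd) (hq ▸ hf.2 hx hz hd hc hdc)
    _ = f x + f z := by
        rw [add_add_add_comm, ← add_smul, ← add_smul, hcd, hdc, one_smul, one_smul]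

end Convexity

section RisingFactorial

variable {x y r : ℝ}

theorem Gamma_add_mul_Gamma_le (hx : 0 < x) (hxy : x ≤ y) (hr : 0 ≤ r) :
    Real.Gamma (x + r) * Real.Gamma y ≤ Real.Gamma (y + r) * Real.Gamma x := by
  have hΓx : 0 < Real.Gamma x := Real.Gamma_pos_of_pos hx
  have hΓy : 0 < Real.Gamma y := Real.Gamma_pos_of_pos (by linarith)
  have hΓxr : 0 < Real.Gamma (x + r) := Real.Gamma_pos_of_pos (by linarith)
  have hΓyr : 0 < Real.Gamma (y + r) := Real.Gamma_pos_of_pos (by linarith)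
  have hy_mem : y ∈ segment ℝ x (y + r) := by
    rw [segment_eq_Icc (by linarith)]
    exact ⟨hxy, by linarith⟩
  have hlog := map_add_map_le_of_convexOn_of_mem_segment Real.convexOn_log_Gamma
    (Set.mem_Ioi.2 hx) (Set.mem_Ioi.2 (by linarith)) hy_mem (q := x + r) (by ring)
  simp only [Function.comp_apply] at hlog
  rw [← Real.log_le_log_iff (by positivity) (by positivity), Real.log_mul hΓxr.ne' hΓy.ne',
    Real.log_mul hΓyr.ne' hΓx.ne']
  linarith

theorem rf_zero (r : ℝ) : rf 0 r = 0 := if_pos rfl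

theorem rf_of_ne_zero (hx : x ≠ 0) (r : ℝ) : rf x r = Real.Gamma (x + r) / Real.Gamma x :=
  if_neg hx

theorem rf_pos (hx : 0 < x) (hxr : 0 < x + r) : 0 < rf x r := by
  rw [rf_of_ne_zero hx.ne']
  exact div_pos (Real.Gamma_pos_of_pos hxr) (Real.Gamma_pos_of_pos hx)

theorem rf_nonneg (hx : 0 ≤ x) (hr : 0 ≤ r) : 0 ≤ rf x r := by
  obtain rfl | hx := hx.eq_or_lt
  · exact (rf_zero r).ge
  · exact (rf_pos hx (by linarith)).le

theorem monotoneOn_rf (hr : 0 ≤ r) : MonotoneOn (fun x => rf x r) (Set.Ici 0) := by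
  intro x hx y hy hxy
  obtain rfl | hx : 0 = x ∨ 0 < x := (Set.mem_Ici.1 hx).eq_or_lt
  · simpa only [rf_zero] using rf_nonneg hy hr
  · have hy : 0 < y := hx.trans_le hxy
    simp only [rf_of_ne_zero hx.ne', rf_of_ne_zero hy.ne']
    rw [div_le_div_iff₀ (Real.Gamma_pos_of_pos hx) (Real.Gamma_pos_of_pos hy)]
    exact Gamma_add_mul_Gamma_le hx hxy hr

end RisingFactorial

section GreenFunction

variable {a b t s : ℤ} {α : ℝ}

theorem Gr_nonneg (hα : 1 ≤ α) (ht : a + 1 ≤ t) (hs : a + 2 ≤ s) : 0 ≤ Gr a α t s := by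
  have hΓ : 0 ≤ 1 / Real.Gamma α := one_div_nonneg.2 (Real.Gamma_nonneg_of_nonneg (by linarith))
  have hr : 0 ≤ α - 1 := sub_nonneg.2 hα
  have hta : (0 : ℝ) ≤ t - a - 1 := by exact_mod_cast (by lia : 0 ≤ t - a - 1)
  unfold Gr
  split_ifs with hts
  · exact mul_nonneg hΓ (rf_nonneg hta hr)
  · have hts : (0 : ℝ) ≤ t - s + 1 := by exact_mod_cast (by lia : 0 ≤ t - s + 1)
    have hle : (t - s + 1 : ℝ) ≤ t - a - 1 := by
      exact_mod_cast (by lia : t - s + 1 ≤ t - a - 1)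
    exact mul_nonneg hΓ (sub_nonneg.2 (monotoneOn_rf hr hts hta hle))

theorem Gr_le (hα : 1 ≤ α) : Gr a α t s ≤ rf (t - a - 1) (α - 1) / Real.Gamma α := by
  have hΓ : 0 ≤ 1 / Real.Gamma α := one_div_nonneg.2 (Real.Gamma_nonneg_of_nonneg (by linarith))
  rw [div_eq_inv_mul, ← one_div]
  unfold Gr
  split_ifs with hts
  · exact le_rfl
  · have hts : (0 : ℝ) ≤ t - s + 1 := by exact_mod_cast (by lia : 0 ≤ t - s + 1)
    exact mul_le_mul_of_nonneg_left (sub_le_self _ (rf_nonneg hts (sub_nonneg.2 hα))) hΓ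

theorem sum_norm_Gr_le (hα : 1 ≤ α) (ht : a + 1 ≤ t) (htb : t ≤ b) :
    ∑ s ∈ Finset.Icc (a + 2) b, ‖Gr a α t s‖ ≤
      (b - a - 1) * rf (b - a - 1) (α - 1) / Real.Gamma α := by
  have hΓ : 0 ≤ Real.Gamma α := Real.Gamma_nonneg_of_nonneg (by linarith)
  have hta : (0 : ℝ) ≤ t - a - 1 := by exact_mod_cast (by lia : 0 ≤ t - a - 1)
  have htb' : (t - a - 1 : ℝ) ≤ b - a - 1 := by gcongr
  have hrf : rf (t - a - 1) (α - 1) ≤ rf (b - a - 1) (α - 1) :=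
    monotoneOn_rf (sub_nonneg.2 hα) hta (hta.trans htb') htb'
  have hcard : ((Finset.Icc (a + 2) b).card : ℝ) = b - a - 1 := by
    have hcardZ : ((Finset.Icc (a + 2) b).card : ℤ) = b - a - 1 := by
      rw [Int.card_Icc_of_le _ _ (by lia)]
      ring
    exact_mod_cast hcardZ
  calc ∑ s ∈ Finset.Icc (a + 2) b, ‖Gr a α t s‖
      ≤ (Finset.Icc (a + 2) b).card • (rf (b - a - 1) (α - 1) / Real.Gamma α) := by
        refine Finset.sum_le_card_nsmul _ _ _ fun s hs => ?_
        rw [Real.norm_of_nonneg (Gr_nonneg hα ht (Finset.mem_Icc.1 hs).1)]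
        exact (Gr_le hα).trans (div_le_div_of_nonneg_right hrf hΓ)
    _ = (b - a - 1) * rf (b - a - 1) (α - 1) / Real.Gamma α := by
        rw [nsmul_eq_mul, hcard, mul_div_assoc]

end GreenFunction

theorem one_le_norm_mul_of_eq_smul_sum {ι 𝕜 E : Type*} [NormedField 𝕜] [NormedAddCommGroup E]
    [NormedSpace 𝕜 E] {S T : Finset ι} (hST : S ⊆ T) {K : ι → ι → 𝕜} {c : 𝕜} {M : ℝ} {u : ι → E}
    (hK : ∀ t ∈ T, ∑ s ∈ S, ‖K t s‖ ≤ M) (hu : ∃ t ∈ T, u t ≠ 0)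
    (heq : ∀ t ∈ T, u t = c • ∑ s ∈ S, K t s • u s) : 1 ≤ ‖c‖ * M := by
  obtain ⟨t₀, ht₀, hut₀⟩ := hu
  obtain ⟨t, ht, hmax⟩ := T.exists_max_image (fun t => ‖u t‖) ⟨t₀, ht₀⟩
  have hpos : 0 < ‖u t‖ := (norm_pos_iff.2 hut₀).trans_le (hmax t₀ ht₀)
  have hsum : ‖∑ s ∈ S, K t s • u s‖ ≤ M * ‖u t‖ :=
    calc ‖∑ s ∈ S, K t s • u s‖ ≤ ∑ s ∈ S, ‖K t s‖ * ‖u t‖ := by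
          refine norm_sum_le_of_le S fun s hs => ?_
          rw [norm_smul]
          gcongr
          exact hmax s (hST hs)
      _ = (∑ s ∈ S, ‖K t s‖) * ‖u t‖ := (Finset.sum_mul ..).symm
      _ ≤ M * ‖u t‖ := by
          gcongr
          exact hK t ht
  refine le_of_mul_le_mul_right ?_ hpos
  calc 1 * ‖u t‖ = ‖c‖ * ‖∑ s ∈ S, K t s • u s‖ := by rw [one_mul, ← norm_smul, ← heq t ht]
    _ ≤ ‖c‖ * (M * ‖u t‖) := by gcongr
    _ = ‖c‖ * M * ‖u t‖ := (mul_assoc ..).symm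

theorem right_focal_eigenvalue_bound_general (a b : ℤ) (hab : 2 ≤ b - a) (α : ℝ) (hα : 1 ≤ α)
    (lam : ℝ) (u : ℤ → ℝ) (hu : ∃ t : ℤ, a + 1 ≤ t ∧ t ≤ b ∧ u t ≠ 0)
    (heq : ∀ t : ℤ, a + 1 ≤ t → t ≤ b →
      u t = lam * ∑ s ∈ Finset.Icc (a + 2) b, Gr a α t s * u s) :
    Real.Gamma α / ((b - a - 1 : ℝ) * rf (b - a - 1 : ℝ) (α - 1)) ≤ |lam| := by
  have hΓ : 0 < Real.Gamma α := Real.Gamma_pos_of_pos (by linarith)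
  have hba : (0 : ℝ) < b - a - 1 := by exact_mod_cast (by lia : 0 < b - a - 1)
  have hrf : 0 < rf (b - a - 1) (α - 1) := rf_pos hba (by linarith)
  have hbound : 1 ≤ ‖lam‖ * ((b - a - 1) * rf (b - a - 1) (α - 1) / Real.Gamma α) := by
    refine one_le_norm_mul_of_eq_smul_sum (S := Finset.Icc (a + 2) b) (T := Finset.Icc (a + 1) b)
      (K := Gr a α) (u := u) (Finset.Icc_subset_Icc_left (by lia)) ?_ ?_ ?_
    · exact fun t ht => sum_norm_Gr_le hα (Finset.mem_Icc.1 ht).1 (Finset.mem_Icc.1 ht).2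
    · simpa only [Finset.mem_Icc, and_assoc] using hu
    · exact fun t ht => heq t (Finset.mem_Icc.1 ht).1 (Finset.mem_Icc.1 ht).2
  rwa [← mul_div_assoc, one_le_div hΓ, Real.norm_eq_abs, ← div_le_iff₀ (by positivity)] at hbound

theorem right_focal_eigenvalue_bound (a b : ℤ) (hab : 2 ≤ b - a) (α : ℝ)
    (hα1 : 1 < α) (hα2 : α < 2) (lam : ℝ) (u : ℤ → ℝ)
    (hu : ∃ t : ℤ, a + 1 ≤ t ∧ t ≤ b ∧ u t ≠ 0)
    (heq : ∀ t : ℤ, a + 1 ≤ t → t ≤ b →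
      u t = lam * ∑ s ∈ Finset.Icc (a + 2) b, Gr a α t s * u s) :
    Real.Gamma α / ((b - a - 1 : ℝ) * rf (b - a - 1 : ℝ) (α - 1)) ≤ |lam| :=
  right_focal_eigenvalue_bound_general a b hab α hα1.le lam u hu heq
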